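/- arXiv:1901.07827 — 2 statements merged into one kernel-verified Lean document; each statement's English description precedes it below -/
import Mathlib

section
/- Let n be a positive natural, t ∈ ℝⁿ with t ≠ 0, and λ > 0, ρ > 0. Then f* = t · (max(‖t‖₂ − λ/ρ, 0) / ‖t‖₂) is the unique global minimizer over f ∈ ℝⁿ of the function f ↦ λ·‖f‖₂ + (ρ/2)·‖f − t‖₂². Moreover, if t = 0, then f* = 0 is the unique global minimizer. -/
/-!
If `ρ • (t - s)` is a subgradient of `g` at `s`, expanding `‖f - t‖ ^ 2` around `s` shows that
`f ↦ g f + ρ / 2 * ‖f - t‖ ^ 2` exceeds its value at `s` by at least `ρ / 2 * ‖f - s‖ ^ 2`, so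
`s` is its unique minimizer. A vector `v` with `‖v‖ ≤ c` and `⟪v, s⟫ = c * ‖s‖` is a subgradient of
`c * ‖·‖` at `s` by Cauchy–Schwarz. For `s` the soft-thresholding of `t` at level `τ = c / ρ`, the
residual `t - s` is the projection of `t` onto the ball of radius `τ`: it has norm `min ‖t‖ τ`,
it lies on the ray of `s`, and that norm is exactly `τ` unless `s = 0`.
-/

section SoftThreshold

variable {E : Type*} [NormedAddCommGroup E] [NormedSpace ℝ E]

/-- The group (block) soft-thresholding of `t` at level `τ`, which shortens `t` by `τ`, or to `0` if
`‖t‖ ≤ τ`. At `t = 0` the quotient is the junk value `0`, but the scalar multiple is `0` in any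
case. -/
noncomputable def groupSoftThreshold (τ : ℝ) (t : E) : E :=
  (max (‖t‖ - τ) 0 / ‖t‖) • t

theorem groupSoftThreshold_zero (τ : ℝ) : groupSoftThreshold τ (0 : E) = 0 :=
  smul_zero _

theorem norm_groupSoftThreshold {τ : ℝ} (hτ : 0 ≤ τ) (t : E) :
    ‖groupSoftThreshold τ t‖ = max (‖t‖ - τ) 0 := by
  rw [groupSoftThreshold, norm_smul, Real.norm_of_nonneg (by positivity)]
  refine div_mul_cancel_of_imp fun ht ↦ ?_
  rw [ht, zero_sub, max_eq_right (neg_nonpos.mpr hτ)]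

theorem sub_groupSoftThreshold (τ : ℝ) (t : E) :
    t - groupSoftThreshold τ t = (min ‖t‖ τ / ‖t‖) • t := by
  rcases eq_or_ne t 0 with rfl | ht
  · simp [groupSoftThreshold_zero]
  have min_eq : min ‖t‖ τ = ‖t‖ - max (‖t‖ - τ) 0 := by grind
  rw [groupSoftThreshold, min_eq, sub_div, div_self (norm_ne_zero_iff.mpr ht), sub_smul, one_smul]

theorem norm_sub_groupSoftThreshold {τ : ℝ} (hτ : 0 ≤ τ) (t : E) :
    ‖t - groupSoftThreshold τ t‖ = min ‖t‖ τ := by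
  rw [sub_groupSoftThreshold, norm_smul, Real.norm_of_nonneg (by positivity)]
  refine div_mul_cancel_of_imp fun ht ↦ ?_
  rw [ht, min_eq_left hτ]

theorem sameRay_sub_groupSoftThreshold {τ : ℝ} (hτ : 0 ≤ τ) (t : E) :
    SameRay ℝ (t - groupSoftThreshold τ t) (groupSoftThreshold τ t) := by
  rw [sub_groupSoftThreshold]
  exact ((SameRay.refl t).nonneg_smul_left (by positivity)).nonneg_smul_right (by positivity)

end SoftThreshold

section Prox

variable {E : Type*} [NormedAddCommGroup E] [InnerProductSpace ℝ E]

/-- `v` is a subgradient of `g` at `s`: the affine function through `(s, g s)` with gradient `v`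
lies below `g` everywhere. -/
def IsSubgradientAt (g : E → ℝ) (v s : E) : Prop :=
  ∀ f, g s + inner ℝ v (f - s) ≤ g f

theorem isSubgradientAt_const_mul_norm {c : ℝ} {v s : E} (norm_le : ‖v‖ ≤ c)
    (inner_eq : inner ℝ v s = c * ‖s‖) : IsSubgradientAt (fun f ↦ c * ‖f‖) v s := fun f ↦
  calc c * ‖s‖ + inner ℝ v (f - s) = inner ℝ v f := by rw [inner_sub_right, inner_eq]; ring
    _ ≤ ‖v‖ * ‖f‖ := real_inner_le_norm v f
    _ ≤ c * ‖f‖ := by gcongr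

theorem IsSubgradientAt.quadratic_growth_add_sq_norm_sub {g : E → ℝ} {ρ : ℝ} {t s : E}
    (hg : IsSubgradientAt g (ρ • (t - s)) s) (f : E) :
    g s + ρ / 2 * ‖s - t‖ ^ 2 + ρ / 2 * ‖f - s‖ ^ 2 ≤ g f + ρ / 2 * ‖f - t‖ ^ 2 := by
  have expand : ‖f - t‖ ^ 2 = ‖f - s‖ ^ 2 - 2 * inner ℝ (t - s) (f - s) + ‖s - t‖ ^ 2 := by
    rw [← sub_sub_sub_cancel_right f t s, norm_sub_sq_real, real_inner_comm, norm_sub_rev s t]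
  have subgradient := hg f
  rw [real_inner_smul_left] at subgradient
  rw [expand]
  linarith

theorem inner_sub_groupSoftThreshold {τ : ℝ} (hτ : 0 ≤ τ) (t : E) :
    inner ℝ (t - groupSoftThreshold τ t) (groupSoftThreshold τ t) =
      τ * ‖groupSoftThreshold τ t‖ := by
  rw [inner_eq_norm_mul_iff_real.mpr (sameRay_sub_groupSoftThreshold hτ t).norm_smul_eq.symm,
    norm_sub_groupSoftThreshold hτ, norm_groupSoftThreshold hτ]
  rcases le_total ‖t‖ τ with ht | ht
  · rw [max_eq_right (sub_nonpos.mpr ht), mul_zero, mul_zero]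
  · rw [min_eq_right ht]

theorem isSubgradientAt_groupSoftThreshold {c ρ : ℝ} (hc : 0 ≤ c) (hρ : 0 < ρ) (t : E) :
    IsSubgradientAt (fun f ↦ c * ‖f‖) (ρ • (t - groupSoftThreshold (c / ρ) t))
      (groupSoftThreshold (c / ρ) t) := by
  have hτ : 0 ≤ c / ρ := by positivity
  apply isSubgradientAt_const_mul_norm
  · calc ‖ρ • (t - groupSoftThreshold (c / ρ) t)‖ = ρ * min ‖t‖ (c / ρ) := by
          rw [norm_smul, Real.norm_of_nonneg hρ.le, norm_sub_groupSoftThreshold hτ]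
      _ ≤ ρ * (c / ρ) := by gcongr; exact min_le_right _ _
      _ = c := mul_div_cancel₀ c hρ.ne'
  · rw [real_inner_smul_left, inner_sub_groupSoftThreshold hτ, ← mul_assoc,
      mul_div_cancel₀ c hρ.ne']

theorem stmt6_general (t : E) {lam ρ : ℝ} (hlam : 0 ≤ lam) (hρ : 0 < ρ) (h : E → ℝ)
    (hh : ∀ f, h f = lam * ‖f‖ + ρ / 2 * ‖f - t‖ ^ 2) :
    (∀ f, h (groupSoftThreshold (lam / ρ) t) ≤ h f) ∧
      ∀ f, f ≠ groupSoftThreshold (lam / ρ) t → h (groupSoftThreshold (lam / ρ) t) < h f := by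
  have growth (f : E) : h (groupSoftThreshold (lam / ρ) t) +
      ρ / 2 * ‖f - groupSoftThreshold (lam / ρ) t‖ ^ 2 ≤ h f := by
    simpa only [hh] using
      (isSubgradientAt_groupSoftThreshold hlam hρ t).quadratic_growth_add_sq_norm_sub f
  refine ⟨fun f ↦ (le_add_of_nonneg_right (by positivity)).trans (growth f), fun f hf ↦ ?_⟩
  have dist_pos : 0 < ‖f - groupSoftThreshold (lam / ρ) t‖ := norm_sub_pos_iff.mpr hf
  exact (lt_add_of_pos_right _ (by positivity)).trans_le (growth f)

end Prox

/-- Group soft-thresholding: for `t ≠ 0`, `f* = (max(‖t‖ − λ/ρ, 0)/‖t‖) • t` is the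
unique global minimizer of `f ↦ λ·‖f‖₂ + (ρ/2)·‖f − t‖₂²`; for `t = 0`, `f* = 0` is
the unique global minimizer. -/
theorem stmt6 (n : ℕ) (hn : 0 < n) (t : EuclideanSpace ℝ (Fin n))
    (lam ρ : ℝ) (hlam : 0 < lam) (hρ : 0 < ρ)
    (h : EuclideanSpace ℝ (Fin n) → ℝ)
    (hh : ∀ f, h f = lam * ‖f‖ + ρ / 2 * ‖f - t‖ ^ 2) :
    (t ≠ 0 →
      (∀ f, h ((max (‖t‖ - lam / ρ) 0 / ‖t‖) • t) ≤ h f) ∧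
        ∀ f, f ≠ (max (‖t‖ - lam / ρ) 0 / ‖t‖) • t →
          h ((max (‖t‖ - lam / ρ) 0 / ‖t‖) • t) < h f) ∧
      (t = 0 → (∀ f, h 0 ≤ h f) ∧ ∀ f, f ≠ 0 → h 0 < h f) := by
  refine ⟨fun _ ↦ stmt6_general t hlam.le hρ h hh, fun ht ↦ ?_⟩
  simpa only [ht, groupSoftThreshold_zero] using stmt6_general t hlam.le hρ h hh
end

section
/- Let m, n be positive naturals, let T be an m×n real matrix with rows T₁,…,T_m, and let λ > 0, ρ > 0. Define F* to be the m×n matrix whose i-th row is Tᵢ · (max(‖Tᵢ‖₂ − λ/ρ, 0)/‖Tᵢ‖₂) when Tᵢ ≠ 0, and the zero vector when Tᵢ = 0. Then F* is a global minimizer over all m×n real matrices F of the objective λ·‖F‖_{2,1} + (ρ/2)·‖F − T‖_F², where ‖F‖_{2,1} = Σᵢ ‖Fᵢ‖₂ is the sum of the Euclidean norms of the rows of F and ‖·‖_F denotes the Frobenius norm. -/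
/-!
By the reverse triangle inequality `λ‖x‖ + (ρ/2)‖x - t‖²` is at least
`λr + (ρ/2)(r - ‖t‖)²` with `r = ‖x‖`, with equality when `x` is a nonnegative multiple of `t`.
The latter is a parabola in `r` with vertex `‖t‖ - λ/ρ`, so its minimum over `r ≥ 0` is attained at
`max (‖t‖ - λ/ρ) 0`, which is the norm of the soft-thresholding of `t`. The objective is a sum of
such terms, one for each row.
-/

open Set

theorem isMinOn_Ici_max_sub_div (lam a : ℝ) {ρ : ℝ} (hρ : 0 < ρ) :
    IsMinOn (fun r : ℝ ↦ lam * r + ρ / 2 * (r - a) ^ 2) (Ici 0) (max (a - lam / ρ) 0) := by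
  intro r (hr : 0 ≤ r)
  have complete_square (s : ℝ) : lam * s + ρ / 2 * (s - a) ^ 2 =
      ρ / 2 * (s - (a - lam / ρ)) ^ 2 + (lam * a - lam ^ 2 / (2 * ρ)) := by
    field
  have dist_sq_le : (max (a - lam / ρ) 0 - (a - lam / ρ)) ^ 2 ≤ (r - (a - lam / ρ)) ^ 2 := by
    rcases le_total (a - lam / ρ) 0 with hv | hv
    · rw [max_eq_right hv]
      gcongr
    · rw [max_eq_left hv, sub_self, zero_pow two_ne_zero]
      positivity
  simp only [mem_ofPred_eq, complete_square]
  gcongr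

section SoftThreshold

variable {E : Type*} [SeminormedAddCommGroup E] [NormedSpace ℝ E]

/-- Soft-thresholding of a vector at level `k`, for `k ≥ 0` a proximal map of `k‖·‖`: it shortens
`t` by `k`, stopping at `0`. Vectors of norm zero are sent to `0`, since there the scalar is
`x / 0 = 0`. -/
noncomputable def softThreshold (k : ℝ) (t : E) : E :=
  (max (‖t‖ - k) 0 / ‖t‖) • t

theorem norm_softThreshold {k : ℝ} (hk : 0 ≤ k) (t : E) :
    ‖softThreshold k t‖ = max (‖t‖ - k) 0 := by
  rw [softThreshold, norm_smul_of_nonneg (by positivity)]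
  refine div_mul_cancel_of_imp fun ht ↦ ?_
  rw [ht, zero_sub, max_eq_right (neg_nonpos.2 hk)]

theorem norm_softThreshold_sub_self (k : ℝ) (t : E) :
    ‖softThreshold k t - t‖ = |‖softThreshold k t‖ - ‖t‖| :=
  (SameRay.sameRay_nonneg_smul_left t (by positivity)).norm_sub

theorem isMinOn_softThreshold {lam ρ : ℝ} (hlam : 0 ≤ lam) (hρ : 0 < ρ) (t : E) :
    IsMinOn (fun x : E ↦ lam * ‖x‖ + ρ / 2 * ‖x - t‖ ^ 2) univ (softThreshold (lam / ρ) t) := by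
  intro x _
  calc lam * ‖softThreshold (lam / ρ) t‖ + ρ / 2 * ‖softThreshold (lam / ρ) t - t‖ ^ 2
    _ = lam * max (‖t‖ - lam / ρ) 0 + ρ / 2 * (max (‖t‖ - lam / ρ) 0 - ‖t‖) ^ 2 := by
      rw [norm_softThreshold_sub_self, sq_abs, norm_softThreshold (by positivity)]
    _ ≤ lam * ‖x‖ + ρ / 2 * (‖x‖ - ‖t‖) ^ 2 :=
      isMinOn_Ici_max_sub_div lam ‖t‖ hρ (norm_nonneg x)
    _ ≤ lam * ‖x‖ + ρ / 2 * ‖x - t‖ ^ 2 := by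
      rw [← sq_abs (‖x‖ - ‖t‖)]
      gcongr
      exact abs_norm_sub_norm_le x t

end SoftThreshold

theorem stmt7_general {ι : Type*} [Fintype ι] {E : ι → Type*}
    [∀ i, SeminormedAddCommGroup (E i)] [∀ i, NormedSpace ℝ (E i)]
    {lam ρ : ℝ} (hlam : 0 ≤ lam) (hρ : 0 < ρ) (T : ∀ i, E i) :
    IsMinOn (fun F : ∀ i, E i ↦ lam * ∑ i, ‖F i‖ + ρ / 2 * ∑ i, ‖F i - T i‖ ^ 2) univ
      (fun i ↦ softThreshold (lam / ρ) (T i)) := by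
  intro F _
  simp only [mem_ofPred_eq, Finset.mul_sum, ← Finset.sum_add_distrib]
  exact Finset.sum_le_sum fun i _ ↦ isMinOn_softThreshold hlam hρ (T i) (mem_univ (F i))

theorem ofLp_softThreshold_toLp {ι : Type*} [Fintype ι] (k : ℝ) (t : ι → ℝ) :
    (softThreshold k (WithLp.toLp 2 t)).ofLp =
      if t = 0 then 0 else (max (√(∑ j, t j ^ 2) - k) 0 / √(∑ j, t j ^ 2)) • t := by
  split_ifs with ht
  · simp [softThreshold, ht]
  · simp [softThreshold, EuclideanSpace.norm_eq]

/-- Row-wise group soft-thresholding (Eq. 11): `Fstar` is a global minimizer of the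
`ℓ_{2,1}`-regularized proximal objective `λ·‖F‖_{2,1} + (ρ/2)·‖F − T‖_F²`. -/
theorem stmt7 (m n : ℕ) (hm : 0 < m) (hn : 0 < n)
    (T : Matrix (Fin m) (Fin n) ℝ) (lam ρ : ℝ) (hlam : 0 < lam) (hρ : 0 < ρ)
    (Fstar : Matrix (Fin m) (Fin n) ℝ)
    (hFstar : ∀ i, Fstar i =
      if T i = 0 then 0
      else (max (Real.sqrt (∑ j, (T i j) ^ 2) - lam / ρ) 0 /
        Real.sqrt (∑ j, (T i j) ^ 2)) • T i) :
    ∀ F : Matrix (Fin m) (Fin n) ℝ,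
      lam * (∑ i, Real.sqrt (∑ j, (Fstar i j) ^ 2)) +
          ρ / 2 * ∑ i, ∑ j, (Fstar i j - T i j) ^ 2 ≤
        lam * (∑ i, Real.sqrt (∑ j, (F i j) ^ 2)) +
          ρ / 2 * ∑ i, ∑ j, (F i j - T i j) ^ 2 := by
  intro F
  simpa [EuclideanSpace.norm_eq, Real.sq_sqrt, Finset.sum_nonneg, sq_nonneg, hFstar,
      ← ofLp_softThreshold_toLp] using
    stmt7_general hlam.le hρ (fun i ↦ WithLp.toLp 2 (T i)) (mem_univ fun i ↦ WithLp.toLp 2 (F i))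
end
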